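/- In the two-mode noisy interferometry setting, the phase parameter is statistically independent of both noise parameters: for any symmetric matrices L_φ, L_x, L_y with V L_ζ V + Ω L_ζ Ω = ∂_ζ V (ζ ∈ {φ, x, y}), one has (1/2)·tr( (∂_x V) · L_φ ) + 2·(∂_φ d)ᵀ V⁻¹ (∂_x d) = 0 and (1/2)·tr( (∂_y V) · L_φ ) + 2·(∂_φ d)ᵀ V⁻¹ (∂_y d) = 0, i.e., ℱ_{φx} = ℱ_{φy} = 0. -/

import Mathlib

open Matrix

noncomputable section

/-- The standard symplectic form on two modes (4×4). -/
def Omega4 : Matrix (Fin 4) (Fin 4) ℝ :=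
  !![0, 1, 0, 0; -1, 0, 0, 0; 0, 0, 0, 1; 0, 0, -1, 0]

/-- Covariance matrix of the two-mode squeezed input with squeezing parameter `r`. -/
def V0 (r : ℝ) : Matrix (Fin 4) (Fin 4) ℝ :=
  !![Real.cosh (2*r), 0, Real.sinh (2*r), 0;
     0, Real.cosh (2*r), 0, -Real.sinh (2*r);
     Real.sinh (2*r), 0, Real.cosh (2*r), 0;
     0, -Real.sinh (2*r), 0, Real.cosh (2*r)]

/-- Input displacement `√2·(0, a, 0, a)ᵀ` of the optimal probe. -/
def d0 (a : ℝ) : Fin 4 → ℝ := ![0, Real.sqrt 2 * a, 0, Real.sqrt 2 * a]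

/-- Phase rotations by `±φ/2` on the two modes. -/
def Sphase (φ : ℝ) : Matrix (Fin 4) (Fin 4) ℝ :=
  !![Real.cos (φ/2), Real.sin (φ/2), 0, 0;
     -Real.sin (φ/2), Real.cos (φ/2), 0, 0;
     0, 0, Real.cos (φ/2), -Real.sin (φ/2);
     0, 0, Real.sin (φ/2), Real.cos (φ/2)]

/-- Evolved covariance matrix `x·S_φ V₀ S_φᵀ + y·𝟙₄`. -/
def Vm (r φ x y : ℝ) : Matrix (Fin 4) (Fin 4) ℝ :=
  x • (Sphase φ * V0 r * (Sphase φ)ᵀ) + y • (1 : Matrix (Fin 4) (Fin 4) ℝ)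

/-- Evolved displacement `√x·S_φ d₀`. -/
def dm (a φ x : ℝ) : Fin 4 → ℝ := Real.sqrt x • (Sphase φ).mulVec (d0 a)

/-- Entrywise partial derivative of `Vm` with respect to `φ`. -/
def dVdphi (r φ x y : ℝ) : Matrix (Fin 4) (Fin 4) ℝ :=
  Matrix.of fun i j => deriv (fun t => Vm r t x y i j) φ

/-- Entrywise partial derivative of `Vm` with respect to `x`. -/
def dVdx (r φ x y : ℝ) : Matrix (Fin 4) (Fin 4) ℝ :=
  Matrix.of fun i j => deriv (fun t => Vm r φ t y i j) x

/-- Entrywise partial derivative of `Vm` with respect to `y`. -/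
def dVdy (r φ x y : ℝ) : Matrix (Fin 4) (Fin 4) ℝ :=
  Matrix.of fun i j => deriv (fun t => Vm r φ x t i j) y

/-- Entrywise partial derivative of `dm` with respect to `φ`. -/
def ddphi (a φ x : ℝ) : Fin 4 → ℝ := fun i => deriv (fun t => dm a t x i) φ

/-- Entrywise partial derivative of `dm` with respect to `x`. -/
def ddx (a φ x : ℝ) : Fin 4 → ℝ := fun i => deriv (fun t => dm a φ t i) x

/-- Entrywise partial derivative of `dm` with respect to `y` (the displacement does
not depend on `y`). -/
def ddy (a φ x y : ℝ) : Fin 4 → ℝ := fun i => deriv (fun _t : ℝ => dm a φ x i) y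

lemma conj_eq (r φ : ℝ) : Sphase φ * V0 r * (Sphase φ)ᵀ = V0 r := by
  have h := Real.sin_sq_add_cos_sq (φ/2)
  ext i j
  simp only [Matrix.mul_apply, Fin.sum_univ_four, Matrix.transpose_apply]
  fin_cases i <;> fin_cases j <;> simp [Sphase, V0] <;> first | ring1 | grind

lemma Vm_eq (r φ x y : ℝ) : Vm r φ x y =
    !![x * Real.cosh (2*r) + y, 0, x * Real.sinh (2*r), 0;
     0, x * Real.cosh (2*r) + y, 0, -(x * Real.sinh (2*r));
     x * Real.sinh (2*r), 0, x * Real.cosh (2*r) + y, 0;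
     0, -(x * Real.sinh (2*r)), 0, x * Real.cosh (2*r) + y] := by
  rw [Vm, conj_eq]
  ext i j
  fin_cases i <;> fin_cases j <;> simp [V0]

lemma dVdphi_eq (r φ x y : ℝ) : dVdphi r φ x y = 0 := by
  ext i j
  simp [dVdphi, Vm_eq]

lemma dm_eq (a φ x : ℝ) : dm a φ x = (Real.sqrt x) • ((Real.sqrt 2 * a) •
    ![Real.sin (φ/2), Real.cos (φ/2), -Real.sin (φ/2), Real.cos (φ/2)]) := by
  ext i
  fin_cases i <;> simp [dm, Sphase, d0, Matrix.mulVec, dotProduct, Fin.sum_univ_four] <;> ring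

lemma ddx_eq (a φ x : ℝ) : ddx a φ x = (deriv Real.sqrt x * (Real.sqrt 2 * a)) •
    ![Real.sin (φ/2), Real.cos (φ/2), -Real.sin (φ/2), Real.cos (φ/2)] := by
  ext i
  simp only [ddx, dm_eq, Pi.smul_apply, smul_eq_mul]
  rw [deriv_mul_const_field]
  ring

lemma ddphi_eq (a φ x : ℝ) : ddphi a φ x = (Real.sqrt x * (Real.sqrt 2 * a) / 2) •
    ![Real.cos (φ/2), -Real.sin (φ/2), -Real.cos (φ/2), -Real.sin (φ/2)] := by
  have h0 : HasDerivAt (fun t : ℝ => t/2) (1/2) φ := (hasDerivAt_id φ).div_const 2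
  have hs := h0.sin
  have hc := h0.cos
  have hn := hs.neg
  ext i
  simp only [ddphi, dm_eq, Pi.smul_apply, smul_eq_mul]
  rw [deriv_const_mul_field, deriv_const_mul_field]
  fin_cases i
  · simp [hs.deriv]; ring
  · simp [hc.deriv]; ring
  · simp [hs.deriv]; ring
  · simp [hc.deriv]; ring

lemma trace_swap (V O A B : Matrix (Fin 4) (Fin 4) ℝ) :
    ((V * A * V + O * A * O) * B).trace = (A * (V * B * V + O * B * O)).trace := by
  have key (M : Matrix (Fin 4) (Fin 4) ℝ) : (M * A * M * B).trace = (A * (M * B * M)).trace := by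
    rw [Matrix.mul_assoc, Matrix.mul_assoc M A, Matrix.trace_mul_comm]
    simp only [Matrix.mul_assoc]
  rw [Matrix.add_mul, Matrix.mul_add, Matrix.trace_add, Matrix.trace_add, key, key]

theorem qfi_phase_noise_independence (r a φ x y : ℝ)
    (hr : 0 ≤ r) (hx : 0 < x) (hy : |1 - x| < y)
    (Lφ Lx Ly : Matrix (Fin 4) (Fin 4) ℝ)
    (hLφs : Lφ.IsSymm) (hLxs : Lx.IsSymm) (hLys : Ly.IsSymm)
    (hLφ : Vm r φ x y * Lφ * Vm r φ x y + Omega4 * Lφ * Omega4 = dVdphi r φ x y)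
    (hLx : Vm r φ x y * Lx * Vm r φ x y + Omega4 * Lx * Omega4 = dVdx r φ x y)
    (hLy : Vm r φ x y * Ly * Vm r φ x y + Omega4 * Ly * Omega4 = dVdy r φ x y) :
    (1/2) * (dVdx r φ x y * Lφ).trace
      + 2 * (ddphi a φ x ⬝ᵥ (Vm r φ x y)⁻¹.mulVec (ddx a φ x)) = 0 ∧
    (1/2) * (dVdy r φ x y * Lφ).trace
      + 2 * (ddphi a φ x ⬝ᵥ (Vm r φ x y)⁻¹.mulVec (ddy a φ x y)) = 0 := by
  rw [dVdphi_eq] at hLφ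
  have h1 : (dVdx r φ x y * Lφ).trace = 0 := by
    rw [← hLx, trace_swap, hLφ]; simp
  have h2 : (dVdy r φ x y * Lφ).trace = 0 := by
    rw [← hLy, trace_swap, hLφ]; simp
  have h3 : ddy a φ x y = 0 := by
    ext i; simp [ddy]
  rw [h1, h2, h3]
  refine ⟨?_, by simp⟩
  rw [ddx_eq, ddphi_eq]
  set u : Fin 4 → ℝ := ![Real.sin (φ/2), Real.cos (φ/2), -Real.sin (φ/2), Real.cos (φ/2)] with hu
  set l : ℝ := x * Real.cosh (2*r) + y - x * Real.sinh (2*r) with hl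
  have hlpos : 0 < l := by
    have hy0 : 0 < y := lt_of_le_of_lt (abs_nonneg _) hy
    have := mul_pos hx (sub_pos.2 (Real.sinh_lt_cosh (2*r)))
    rw [hl]; linarith
  have hVu : (Vm r φ x y).mulVec u = l • u := by
    rw [Vm_eq, hu, hl]
    ext i
    fin_cases i <;> simp [Matrix.mulVec, dotProduct, Fin.sum_univ_four] <;> ring
  have horth : (![Real.cos (φ/2), -Real.sin (φ/2), -Real.cos (φ/2), -Real.sin (φ/2)] : Fin 4 → ℝ)
      ⬝ᵥ u = 0 := by
    simp [hu, dotProduct, Fin.sum_univ_four]; ring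
  by_cases hdet : IsUnit (Vm r φ x y).det
  · have hinv : (Vm r φ x y)⁻¹.mulVec u = l⁻¹ • u := by
      have h4 : (Vm r φ x y)⁻¹.mulVec ((Vm r φ x y).mulVec u) = u := by
        rw [Matrix.mulVec_mulVec, Matrix.nonsing_inv_mul _ hdet, Matrix.one_mulVec]
      rw [hVu, Matrix.mulVec_smul] at h4
      rw [eq_inv_smul_iff₀ hlpos.ne', h4]
    rw [Matrix.mulVec_smul, hinv]
    rw [smul_dotProduct, dotProduct_smul, dotProduct_smul, horth]
    simp
  · rw [Matrix.nonsing_inv_apply_not_isUnit _ hdet]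
    simp
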